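/- arXiv:2402.02801 — 3 statements merged into one kernel-verified Lean document; each statement's English description precedes it below -/
import Mathlib

section
/- Let Ω be a measurable space, Y a finite nonempty type, f : Ω → Y a measurable function, and μ, ν probability measures on Ω. Suppose c_A ∈ Y and real numbers p_A, p_B with p_A ≥ p_B satisfy μ{ω : f(ω) = c_A} ≥ p_A and μ{ω : f(ω) = c} ≤ p_B for every c ≠ c_A. If dTV(μ, ν) < (p_A − p_B)/2, then ν{ω : f(ω) = c_A} > ν{ω : f(ω) = c} for every c ≠ c_A; in particular, c_A is the unique maximizer over c ∈ Y of the function c ↦ ν{ω : f(ω) = c}. -/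
open MeasureTheory

/-- Total variation distance between two measures:
`dTV(μ, ν) = sup over measurable sets A of |μ(A) − ν(A)|`. -/
noncomputable def tvDist {Ω : Type*} [MeasurableSpace Ω] (μ ν : Measure Ω) : ℝ :=
  ⨆ A : {s : Set Ω // MeasurableSet s}, |(μ A.1).toReal - (ν A.1).toReal|

theorem certified_winning_tickets
    {Ω Y : Type*} [MeasurableSpace Ω] [MeasurableSpace Y]
    [MeasurableSingletonClass Y] [Fintype Y] [Nonempty Y]
    (f : Ω → Y) (hf : Measurable f)
    (μ ν : Measure Ω) [IsProbabilityMeasure μ] [IsProbabilityMeasure ν]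
    (cA : Y) (pA pB : ℝ) (hpAB : pA ≥ pB)
    (hA : (μ {ω | f ω = cA}).toReal ≥ pA)
    (hB : ∀ c, c ≠ cA → (μ {ω | f ω = c}).toReal ≤ pB)
    (hTV : tvDist μ ν < (pA - pB) / 2) :
    (∀ c, c ≠ cA → (ν {ω | f ω = cA}).toReal > (ν {ω | f ω = c}).toReal) ∧
      (∀ c : Y, (∀ c' : Y, (ν {ω | f ω = c'}).toReal ≤ (ν {ω | f ω = c}).toReal) → c = cA) := by
  have key : ∀ c : Y, |(μ {ω | f ω = c}).toReal - (ν {ω | f ω = c}).toReal| ≤ tvDist μ ν := by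
    intro c
    have hm : MeasurableSet {ω | f ω = c} := hf (measurableSet_singleton c)
    have hb : BddAbove (Set.range fun A : {s : Set Ω // MeasurableSet s} =>
        |(μ A.1).toReal - (ν A.1).toReal|) := by
      refine ⟨1, ?_⟩
      rintro _ ⟨A, rfl⟩
      have h1 : (μ A.1).toReal ≤ 1 := measureReal_le_one
      have h2 : (ν A.1).toReal ≤ 1 := measureReal_le_one
      have h3 : 0 ≤ (μ A.1).toReal := ENNReal.toReal_nonneg
      have h4 : 0 ≤ (ν A.1).toReal := ENNReal.toReal_nonneg
      exact abs_le.mpr ⟨by linarith, by linarith⟩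
    exact le_ciSup hb ⟨_, hm⟩
  have main : ∀ c, c ≠ cA → (ν {ω | f ω = cA}).toReal > (ν {ω | f ω = c}).toReal := by
    intro c hc
    have h1 := (abs_le.mp (key cA)).2
    have h2 := (abs_le.mp (key c)).1
    have h3 := hB c hc
    linarith
  refine ⟨main, fun c h => ?_⟩
  by_contra hc
  exact absurd (h cA) (not_le.mpr (main c hc))
end

section
/- Let Ω be a measurable space, Y a finite nonempty type, f : Ω → Y a measurable function, and μ, ν probability measures on Ω. Suppose c_A ∈ Y and real numbers p_A, p_B with p_A ≥ p_B satisfy μ{ω : f(ω) = c_A} ≥ p_A and μ{ω : f(ω) = c} ≤ p_B for every c ≠ c_A. If there exists some c ≠ c_A with ν{ω : f(ω) = c} ≥ ν{ω : f(ω) = c_A}, then dTV(μ, ν) ≥ (p_A − p_B)/2. -/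
open MeasureTheory

theorem prediction_change_forces_tv_distance
    {Ω Y : Type*} [MeasurableSpace Ω] [MeasurableSpace Y]
    [MeasurableSingletonClass Y] [Fintype Y] [Nonempty Y]
    (f : Ω → Y) (hf : Measurable f)
    (μ ν : Measure Ω) [IsProbabilityMeasure μ] [IsProbabilityMeasure ν]
    (cA : Y) (pA pB : ℝ) (hpAB : pA ≥ pB)
    (hA : (μ {ω | f ω = cA}).toReal ≥ pA)
    (hB : ∀ c, c ≠ cA → (μ {ω | f ω = c}).toReal ≤ pB)
    (hchange : ∃ c, c ≠ cA ∧ (ν {ω | f ω = c}).toReal ≥ (ν {ω | f ω = cA}).toReal) :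
    tvDist μ ν ≥ (pA - pB) / 2 := by
  have hm : ∀ c, MeasurableSet {ω | f ω = c} := fun c => hf (measurableSet_singleton c)
  have hle : ∀ (ρ : Measure Ω) [IsProbabilityMeasure ρ] (s : Set Ω), (ρ s).toReal ≤ 1 :=
    fun ρ _ s => measureReal_le_one
  have hbdd : BddAbove (Set.range fun A : {s : Set Ω // MeasurableSet s} =>
      |(μ A.1).toReal - (ν A.1).toReal|) := by
    refine ⟨1, ?_⟩
    rintro _ ⟨A, rfl⟩
    have h1 := hle μ A.1
    have h2 := hle ν A.1
    have h3 : 0 ≤ (μ A.1).toReal := ENNReal.toReal_nonneg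
    have h4 : 0 ≤ (ν A.1).toReal := ENNReal.toReal_nonneg
    exact abs_le.2 ⟨by linarith, by linarith⟩
  have key : ∀ c, |(μ {ω | f ω = c}).toReal - (ν {ω | f ω = c}).toReal| ≤ tvDist μ ν :=
    fun c => le_ciSup hbdd ⟨_, hm c⟩
  obtain ⟨c, hc, hcv⟩ := hchange
  have h1 := (abs_le.1 (key cA)).2
  have h2 := (abs_le.1 (key c)).1
  have h3 := hB c hc
  linarith
end

section
/- Let κ be a probability measure on a measurable space Ω_a, let ι be a finite index set, and for each i ∈ ι let μ_i, ν_i be probability measures on a measurable space Ω_i. Let Y be a finite nonempty type and f : Ω_a × (Π_{i∈ι} Ω_i) → Y a measurable function. Suppose c_A ∈ Y and real numbers p_A ≥ p_B satisfy (κ × ⊗_i μ_i){f = c_A} ≥ p_A and (κ × ⊗_i μ_i){f = c} ≤ p_B for every c ≠ c_A. If there is a real number τ with dTV(μ_i, ν_i) ≤ τ for every i ∈ ι and |ι|·τ < (p_A − p_B)/2, then (κ × ⊗_i ν_i){f = c_A} > (κ × ⊗_i ν_i){f = c} for every c ≠ c_A, so c_A is the unique maximizer over c ∈ Y of c ↦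 (κ × ⊗_i ν_i){f = c}. -/
open MeasureTheory

theorem tv_bound_apply {Ω : Type*} [MeasurableSpace Ω] (m m' : Measure Ω)
    [IsProbabilityMeasure m] [IsProbabilityMeasure m'] {τ : ℝ} (h : tvDist m m' ≤ τ)
    (A : Set Ω) (hA : MeasurableSet A) : |(m A).toReal - (m' A).toReal| ≤ τ := by
  refine le_trans ?_ h
  refine le_ciSup (f := fun A : {s : Set Ω // MeasurableSet s} =>
    |(m A.1).toReal - (m' A.1).toReal|) ?_ ⟨A, hA⟩
  refine ⟨1, ?_⟩
  rintro _ ⟨B, rfl⟩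
  have h1 : m.real B.1 ≤ 1 := measureReal_le_one
  have h2 : m'.real B.1 ≤ 1 := measureReal_le_one
  have h3 : 0 ≤ m.real B.1 := measureReal_nonneg
  have h4 : 0 ≤ m'.real B.1 := measureReal_nonneg
  simp only [Measure.real] at h1 h2 h3 h4
  exact abs_sub_le_iff.2 ⟨by linarith, by linarith⟩

theorem prod_bound {Ω Ω' : Type*} [MeasurableSpace Ω] [MeasurableSpace Ω'] (κ : Measure Ω')
    [IsProbabilityMeasure κ] (m m' : Measure Ω)
    [IsProbabilityMeasure m] [IsProbabilityMeasure m'] {τ : ℝ}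
    (h : ∀ A : Set Ω, MeasurableSet A → |(m A).toReal - (m' A).toReal| ≤ τ)
    (E : Set (Ω' × Ω)) (hE : MeasurableSet E) :
    |((κ.prod m) E).toReal - ((κ.prod m') E).toReal| ≤ τ := by
  have key : ∀ (q : Measure Ω) [IsProbabilityMeasure q],
      Integrable (fun x => (q (Prod.mk x ⁻¹' E)).toReal) κ ∧
      ((κ.prod q) E).toReal = ∫ x, (q (Prod.mk x ⁻¹' E)).toReal ∂κ := by
    intro q _
    have hm := measurable_measure_prodMk_left (ν := q) hE
    constructor
    · refine Integrable.of_bound hm.ennreal_toReal.aestronglyMeasurable 1 ?_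
      refine Filter.Eventually.of_forall fun x => ?_
      rw [Real.norm_of_nonneg ENNReal.toReal_nonneg]
      exact measureReal_le_one (μ := q)
    · rw [Measure.prod_apply hE, integral_toReal hm.aemeasurable]
      exact Filter.Eventually.of_forall fun x => measure_lt_top _ _
  obtain ⟨i1, e1⟩ := key m
  obtain ⟨i2, e2⟩ := key m'
  rw [e1, e2, ← integral_sub i1 i2]
  have := norm_integral_le_of_norm_le_const (μ := κ) (C := τ)
    (f := fun x => (m (Prod.mk x ⁻¹' E)).toReal - (m' (Prod.mk x ⁻¹' E)).toReal)
    (Filter.Eventually.of_forall fun x => by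
      rw [Real.norm_eq_abs]
      exact h _ (measurable_prodMk_left hE))
  simpa using this

theorem pi_update_map {ι : Type*} [Fintype ι] [DecidableEq ι] {Ωb : ι → Type*}
    [∀ i, MeasurableSpace (Ωb i)] (μ : ∀ i, Measure (Ωb i)) [∀ i, IsProbabilityMeasure (μ i)]
    (i : ι) (m : Measure (Ωb i)) [IsProbabilityMeasure m] :
    Measure.pi (Function.update μ i m) =
      ((Measure.pi μ).prod m).map (fun p => Function.update p.1 i p.2) := by
  have inst : ∀ j, IsProbabilityMeasure (Function.update μ i m j) := by
    intro j
    rcases eq_or_ne j i with rfl | h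
    · simpa
    · simpa [h] using inferInstanceAs (IsProbabilityMeasure (μ j))
  have hmeas : Measurable
      (fun p : (∀ j, Ωb j) × Ωb i => Function.update p.1 i p.2) := by
    rw [measurable_pi_iff]
    intro j
    rcases eq_or_ne j i with rfl | h
    · simpa using measurable_snd
    · simpa [h, Function.comp_def] using (measurable_pi_apply j).comp measurable_fst
  refine Measure.pi_eq fun s hs => ?_
  rw [Measure.map_apply hmeas (MeasurableSet.univ_pi hs)]
  have : (fun p : (∀ j, Ωb j) × Ωb i => Function.update p.1 i p.2) ⁻¹' (Set.univ.pi s)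
      = (Set.univ.pi (Function.update s i Set.univ)) ×ˢ (s i) := by
    ext p
    simp only [Set.mem_preimage, Set.mem_pi, Set.mem_univ, true_imp_iff, Set.mem_prod]
    constructor
    · intro h
      refine ⟨fun j => ?_, by simpa using h i⟩
      rcases eq_or_ne j i with rfl | hj
      · simp
      · simpa [hj] using h j
    · rintro ⟨h, h'⟩ j
      rcases eq_or_ne j i with rfl | hj
      · simpa
      · simpa [hj] using h j
  rw [this, Measure.prod_prod, Measure.pi_pi,
    ← Finset.mul_prod_erase _ _ (Finset.mem_univ i), ← Finset.mul_prod_erase _ _ (Finset.mem_univ i)]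
  simp only [Function.update_self, measure_univ, one_mul]
  rw [mul_comm]
  congr 1
  refine Finset.prod_congr rfl fun j hj => ?_
  simp [Finset.ne_of_mem_erase hj]

theorem pi_update_bound {ι : Type*} [Fintype ι] [DecidableEq ι] {Ωb : ι → Type*}
    [∀ i, MeasurableSpace (Ωb i)] (μ : ∀ i, Measure (Ωb i)) [∀ i, IsProbabilityMeasure (μ i)]
    (i : ι) (m m' : Measure (Ωb i)) [IsProbabilityMeasure m] [IsProbabilityMeasure m'] {τ : ℝ}
    (h : tvDist m m' ≤ τ) (E : Set (∀ i, Ωb i)) (hE : MeasurableSet E) :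
    |(Measure.pi (Function.update μ i m) E).toReal
      - (Measure.pi (Function.update μ i m') E).toReal| ≤ τ := by
  have hmeas : Measurable
      (fun p : (∀ j, Ωb j) × Ωb i => Function.update p.1 i p.2) := by
    rw [measurable_pi_iff]
    intro j
    rcases eq_or_ne j i with rfl | h
    · simpa using measurable_snd
    · simpa [h, Function.comp_def] using (measurable_pi_apply j).comp measurable_fst
  rw [pi_update_map, pi_update_map, Measure.map_apply hmeas hE, Measure.map_apply hmeas hE]
  exact prod_bound _ _ _ (tv_bound_apply m m' h) _ (hmeas hE)

theorem pi_bound {ι : Type*} [Fintype ι] {Ωb : ι → Type*}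
    [∀ i, MeasurableSpace (Ωb i)] (μ ν : ∀ i, Measure (Ωb i))
    [∀ i, IsProbabilityMeasure (μ i)] [∀ i, IsProbabilityMeasure (ν i)] {τ : ℝ}
    (h : ∀ i, tvDist (μ i) (ν i) ≤ τ) (E : Set (∀ i, Ωb i)) (hE : MeasurableSet E) :
    |(Measure.pi μ E).toReal - (Measure.pi ν E).toReal| ≤ (Fintype.card ι : ℝ) * τ := by
  classical
  have key : ∀ s : Finset ι,
      |(Measure.pi μ E).toReal - (Measure.pi (s.piecewise ν μ) E).toReal| ≤ (s.card : ℝ) * τ := by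
    intro s
    induction s using Finset.induction_on with
    | empty => simp
    | insert i s hi ih =>
      have inst : ∀ j, IsProbabilityMeasure (s.piecewise ν μ j) := by
        intro j
        by_cases hj : j ∈ s
        · simpa [hj] using inferInstanceAs (IsProbabilityMeasure (ν j))
        · simpa [hj] using inferInstanceAs (IsProbabilityMeasure (μ j))
      have h1 := pi_update_bound (s.piecewise ν μ) i (μ i) (ν i) (h i) E hE
      have h2 : Function.update (s.piecewise ν μ) i (μ i) = s.piecewise ν μ := by
        rw [Function.update_eq_self_iff]
        simp [hi]
      rw [h2, ← Finset.piecewise_insert] at h1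
      rw [Finset.card_insert_of_notMem hi]
      push_cast
      have h3 := abs_sub_le (Measure.pi μ E).toReal (Measure.pi (s.piecewise ν μ) E).toReal
        (Measure.pi ((insert i s).piecewise ν μ) E).toReal
      linarith
  simpa using key Finset.univ

theorem certified_winning_tickets_full
    {Ωa : Type*} [MeasurableSpace Ωa]
    {ι : Type*} [Fintype ι] {Ωb : ι → Type*} [∀ i, MeasurableSpace (Ωb i)]
    {Y : Type*} [MeasurableSpace Y] [MeasurableSingletonClass Y] [Fintype Y] [Nonempty Y]
    (κ : Measure Ωa) [IsProbabilityMeasure κ]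
    (μ ν : ∀ i, Measure (Ωb i))
    [∀ i, IsProbabilityMeasure (μ i)] [∀ i, IsProbabilityMeasure (ν i)]
    (f : Ωa × (∀ i, Ωb i) → Y) (hf : Measurable f)
    (cA : Y) (pA pB : ℝ) (hpAB : pA ≥ pB)
    (hA : ((κ.prod (Measure.pi μ)) {ω | f ω = cA}).toReal ≥ pA)
    (hB : ∀ c, c ≠ cA → ((κ.prod (Measure.pi μ)) {ω | f ω = c}).toReal ≤ pB)
    (τ : ℝ) (hτ : ∀ i, tvDist (μ i) (ν i) ≤ τ)
    (hcard : (Fintype.card ι : ℝ) * τ < (pA - pB) / 2) :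
    (∀ c, c ≠ cA →
        ((κ.prod (Measure.pi ν)) {ω | f ω = cA}).toReal >
          ((κ.prod (Measure.pi ν)) {ω | f ω = c}).toReal) ∧
      (∀ c : Y,
        (∀ c' : Y,
            ((κ.prod (Measure.pi ν)) {ω | f ω = c'}).toReal ≤
              ((κ.prod (Measure.pi ν)) {ω | f ω = c}).toReal) → c = cA) := by
  have main := prod_bound κ (Measure.pi μ) (Measure.pi ν) (pi_bound μ ν hτ)
  have hset : ∀ c, MeasurableSet {ω | f ω = c} := fun c => hf (measurableSet_singleton c)
  have first : ∀ c, c ≠ cA →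
        ((κ.prod (Measure.pi ν)) {ω | f ω = cA}).toReal >
          ((κ.prod (Measure.pi ν)) {ω | f ω = c}).toReal := by
    intro c hc
    have h1 := abs_sub_le_iff.1 (main _ (hset cA))
    have h2 := abs_sub_le_iff.1 (main _ (hset c))
    have h3 := hB c hc
    linarith [h1.1, h2.2]
  refine ⟨first, fun c hc => ?_⟩
  by_contra hne
  exact absurd (hc cA) (not_le.2 (first c hne))
end
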